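/- Let k be a field, d ≥ 1, and S = k[x_0, x_1, …, x_{d+1}]/(x_1²), with x̄_i the image of x_i, graded by total degree. For n ≥ 1 let J_n be the homogeneous ideal (x̄_0^n, x̄_1 x̄_0^{n−σ(n)}) of S, and J_0 = S. Then (i) J_m J_n ⊆ J_{m+n} for all m, n ≥ 0, and (ii) for each n ≥ 1 the degree-2n homogeneous component of J_n has k-dimension equal to C(d+n, d) + C(d+n+σ(n)−1, d), with k-basis consisting of x̄_0^n · M and x̄_1 x̄_0^{n−σ(n)} · M', where M ranges over all monomials of degree n and M' over all monomials of degree n+σ(n)−1 in the d+1 variables x̄_0, x̄_2, …, x̄_{d+1}. -/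

import Mathlib

set_option synthInstance.maxHeartbeats 1000000
set_option maxHeartbeats 1000000

/-!
Cutkosky, "The asymptotic growth of graded linear series on arbitrary projective schemes",
the algebraic core of Example `\ref{Example25}`.

Fix a sequence of positive integers `(i_j)_{j ≥ 1}` with `i 1 = 2`, each `i (j+1)` even and
`i (j+1) > 2^j * i j`, and define `σ` by `σ 1 = 1`, `σ n = i j / 2` for `i j ≤ n < i (j+1)`.

Let `k` be a field, `d ≥ 1`, and `S = k[x₀, x₁, …, x_{d+1}]/(x₁²)`, graded by total degree.
For `n ≥ 1` let `J n = (x̄₀ⁿ, x̄₁ x̄₀^{n - σ n})` and `J 0 = S`.  Then: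
(i)  `J m * J n ⊆ J (m+n)` for all `m, n ≥ 0`;
(ii) for each `n ≥ 1` the degree-`2n` homogeneous component of `J n` has `k`-basis
     consisting of `x̄₀ⁿ · M` and `x̄₁ x̄₀^{n - σ n} · M'`, where `M` ranges over all
     monomials of degree `n` and `M'` over all monomials of degree `n + σ n - 1` in the
     `d+1` variables `x̄₀, x̄₂, …, x̄_{d+1}`; in particular its `k`-dimension equals
     `C(d+n, d) + C(d+n+σ(n)-1, d)`.
-/

noncomputable section

/-- `S = k[x₀, …, x_{d+1}]/(x₁²)`. -/
abbrev DoubleHyperplaneRing (k : Type) [Field k] (d : ℕ) : Type :=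
  MvPolynomial (Fin (d + 2)) k ⧸
    Ideal.span {(MvPolynomial.X 1 : MvPolynomial (Fin (d + 2)) k) ^ 2}

/-- The quotient map `k[x₀, …, x_{d+1}] → S`, `x_i ↦ x̄_i`. -/
abbrev dhQuot (k : Type) [Field k] (d : ℕ) :
    MvPolynomial (Fin (d + 2)) k →ₐ[k] DoubleHyperplaneRing k d :=
  Ideal.Quotient.mkₐ k _

/-- The graded family of ideals `J n = (x̄₀ⁿ, x̄₁ x̄₀^{n - σ n})` (with `J 0 = S`). -/
def dhIdeal (k : Type) [Field k] (d : ℕ) (σ : ℕ → ℕ) (n : ℕ) :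
    Ideal (DoubleHyperplaneRing k d) :=
  if n = 0 then ⊤ else
    Ideal.span {dhQuot k d (MvPolynomial.X 0 ^ n),
      dhQuot k d (MvPolynomial.X 1 * MvPolynomial.X 0 ^ (n - σ n))}

/-- Index type for the monomials of degree `m` in the `d+1` variables
`x₀, x₂, …, x_{d+1}` (the variable `x₁` is omitted). -/
def dhMonIdx (d : ℕ) (m : ℕ) : Type :=
  {v : Fin (d + 2) →₀ ℕ // v 1 = 0 ∧ (v.sum fun _ e => e) = m}

/-- The claimed basis of the degree-`2n` homogeneous component of `J n`:
the elements `x̄₀ⁿ · M` for `M` a monomial of degree `n`, and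
`x̄₁ x̄₀^{n-σ n} · M'` for `M'` a monomial of degree `n + σ n - 1`,
in the variables `x₀, x₂, …, x_{d+1}`. -/
def dhBasisFamily (k : Type) [Field k] (d : ℕ) (σ : ℕ → ℕ) (n : ℕ) :
    dhMonIdx d n ⊕ dhMonIdx d (n + σ n - 1) → DoubleHyperplaneRing k d :=
  Sum.elim
    (fun v => dhQuot k d (MvPolynomial.X 0 ^ n * MvPolynomial.monomial v.1 1))
    (fun v => dhQuot k d
      (MvPolynomial.X 1 * MvPolynomial.X 0 ^ (n - σ n) * MvPolynomial.monomial v.1 1))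

/-- The degree-`2n` homogeneous component of the ideal `J n`: the intersection of `J n`
with the image in `S` of the space of homogeneous polynomials of degree `2n`. -/
def dhComponent (k : Type) [Field k] (d : ℕ) (σ : ℕ → ℕ) (n : ℕ) :
    Submodule k (DoubleHyperplaneRing k d) :=
  Submodule.restrictScalars k (dhIdeal k d σ n) ⊓
    Submodule.map (dhQuot k d).toLinearMap
      (MvPolynomial.homogeneousSubmodule (Fin (d + 2)) k (2 * n))

/-- Exponent vectors of the claimed basis. -/
def dhExp (d s n : ℕ) : dhMonIdx d n ⊕ dhMonIdx d (n + s - 1) → (Fin (d + 2) →₀ ℕ) :=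
  Sum.elim (fun v => Finsupp.single 0 n + v.1)
    (fun v => Finsupp.single 1 1 + Finsupp.single 0 (n - s) + v.1)

lemma dh_family_eq (k : Type) [Field k] (d : ℕ) (σ : ℕ → ℕ) (n : ℕ) :
    dhBasisFamily k d σ n =
      fun x => dhQuot k d (MvPolynomial.monomial (dhExp d (σ n) n x) 1) := by
  funext x
  rcases x with v | v
  · simp only [dhBasisFamily, dhExp, Sum.elim_inl]
    congr 1
    rw [MvPolynomial.X_pow_eq_monomial, MvPolynomial.monomial_mul, one_mul]
  · simp only [dhBasisFamily, dhExp, Sum.elim_inr]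
    congr 1
    rw [MvPolynomial.X_pow_eq_monomial, MvPolynomial.X, MvPolynomial.monomial_mul,
      MvPolynomial.monomial_mul, one_mul, one_mul]

lemma dhExp_inl_one (d s n : ℕ) (v : dhMonIdx d n) : dhExp d s n (Sum.inl v) 1 = 0 := by
  simp [dhExp, v.2.1]

lemma dhExp_inr_one (d s n : ℕ) (v : dhMonIdx d (n + s - 1)) :
    dhExp d s n (Sum.inr v) 1 = 1 := by
  simp [dhExp, v.2.1]

lemma dhExp_le_one (d s n : ℕ) (x) : dhExp d s n x 1 ≤ 1 := by
  rcases x with v | v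
  · simp [dhExp_inl_one]
  · simp [dhExp_inr_one]

lemma dhExp_injective (d s n : ℕ) : Function.Injective (dhExp d s n) := by
  rintro (v | v) (w | w) h
  · have : v.1 = w.1 := by simpa [dhExp] using h
    rw [Subtype.ext this]
  · have := DFunLike.congr_fun h 1
    rw [dhExp_inl_one, dhExp_inr_one] at this
    omega
  · have := DFunLike.congr_fun h 1
    rw [dhExp_inl_one, dhExp_inr_one] at this
    omega
  · have : v.1 = w.1 := by simpa [dhExp] using h
    rw [Subtype.ext this]

lemma dhExp_degree (d s n : ℕ) (h1 : 1 ≤ s) (h2 : s ≤ n) (x) :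
    (dhExp d s n x).degree = 2 * n := by
  rcases x with v | v
  · have : v.1.degree = n := v.2.2
    simp [dhExp, this]
    omega
  · have : v.1.degree = n + s - 1 := v.2.2
    simp only [dhExp, Sum.elim_inr, map_add, Finsupp.degree_single, this]
    omega

lemma dh_mem_ker {k : Type} [Field k] {d : ℕ} {p : MvPolynomial (Fin (d + 2)) k}
    (hp : dhQuot k d p = 0) : ∀ u ∈ p.support, 2 ≤ u 1 := by
  have h : p ∈ Ideal.span {(MvPolynomial.X 1 : MvPolynomial (Fin (d + 2)) k) ^ 2} :=
    Ideal.Quotient.eq_zero_iff_mem.1 hp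
  have h2 : p ∈ Ideal.span ((fun s => MvPolynomial.monomial s (1 : k)) ''
      {(Finsupp.single 1 2 : Fin (d + 2) →₀ ℕ)}) := by
    rw [Set.image_singleton, ← MvPolynomial.X_pow_eq_monomial]
    exact h
  rw [MvPolynomial.mem_ideal_span_monomial_image] at h2
  intro u hu
  obtain ⟨s, hs, hle⟩ := h2 u hu
  rw [Set.mem_singleton_iff.1 hs] at hle
  simpa using hle 1

lemma dh_monomial_zero (k : Type) [Field k] (d : ℕ) (u : Fin (d + 2) →₀ ℕ) (c : k)
    (hu : 2 ≤ u 1) : dhQuot k d (MvPolynomial.monomial u c) = 0 := by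
  refine Ideal.Quotient.eq_zero_iff_mem.2 ?_
  rw [Ideal.mem_span_singleton, MvPolynomial.X_pow_eq_monomial,
    MvPolynomial.monomial_dvd_monomial]
  exact ⟨Or.inr (by simpa using hu), one_dvd _⟩

lemma dh_linInd (k : Type) [Field k] (d : ℕ) (σ : ℕ → ℕ) (n : ℕ) :
    LinearIndependent k (dhBasisFamily k d σ n) := by
  rw [dh_family_eq]
  have h0 : LinearIndependent k
      (fun x => (MvPolynomial.monomial (dhExp d (σ n) n x) (1 : k))) := by
    have := (MvPolynomial.basisMonomials (Fin (d + 2)) k).linearIndependent.comp _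
      (dhExp_injective d (σ n) n)
    simpa [Function.comp_def] using this
  refine h0.map (f := (dhQuot k d).toLinearMap) ?_
  rw [Submodule.disjoint_def]
  intro p hp hker
  have h1 : ∀ u ∈ p.support, u 1 ≤ 1 := by
    clear hker
    induction hp using Submodule.span_induction with
    | mem p hp =>
      obtain ⟨x, rfl⟩ := hp
      intro u hu
      have := Finset.mem_singleton.1 (MvPolynomial.support_monomial_subset hu)
      rw [this]
      exact dhExp_le_one _ _ _ _
    | zero => simp
    | add p q _ _ hp hq =>
      intro u hu
      rcases Finset.mem_union.1 (MvPolynomial.support_add hu) with h | h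
      · exact hp u h
      · exact hq u h
    | smul c p _ hp =>
      intro u hu
      exact hp u (MvPolynomial.support_smul hu)
  have h2 := dh_mem_ker (LinearMap.mem_ker.1 hker)
  rw [← MvPolynomial.support_eq_empty, Finset.eq_empty_iff_forall_notMem]
  intro u hu
  have := h1 u hu
  have := h2 u hu
  omega

lemma dh_mem_ideal {k : Type} [Field k] {d : ℕ} {σ : ℕ → ℕ} {n : ℕ} (hn : 1 ≤ n)
    {p : MvPolynomial (Fin (d + 2)) k} (hp : dhQuot k d p ∈ dhIdeal k d σ n) :
    ∀ u ∈ p.support, 2 ≤ u 1 ∨ n ≤ u 0 ∨ (1 ≤ u 1 ∧ n - σ n ≤ u 0) := by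
  rw [dhIdeal, if_neg (by omega), Ideal.mem_span_pair] at hp
  obtain ⟨a, b, hab⟩ := hp
  obtain ⟨a, rfl⟩ := Ideal.Quotient.mkₐ_surjective k _ a
  obtain ⟨b, rfl⟩ := Ideal.Quotient.mkₐ_surjective k _ b
  set q : MvPolynomial (Fin (d + 2)) k := a * MvPolynomial.X 0 ^ n +
    b * (MvPolynomial.X 1 * MvPolynomial.X 0 ^ (n - σ n)) with hq
  have hz : dhQuot k d (p - q) = 0 := by
    rw [map_sub, sub_eq_zero, ← hab, hq, map_add, map_mul _ a, map_mul _ b]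
  have h1 := dh_mem_ker hz
  have h2 : q ∈ Ideal.span ((fun s => MvPolynomial.monomial s (1 : k)) ''
      {(Finsupp.single 0 n : Fin (d + 2) →₀ ℕ),
        Finsupp.single 1 1 + Finsupp.single 0 (n - σ n)}) := by
    rw [Set.image_pair, Ideal.mem_span_pair]
    refine ⟨a, b, ?_⟩
    rw [hq, MvPolynomial.X_pow_eq_monomial, MvPolynomial.X_pow_eq_monomial, MvPolynomial.X,
      MvPolynomial.monomial_mul, one_mul]
  rw [MvPolynomial.mem_ideal_span_monomial_image] at h2
  intro u hu
  have hpq : p = (p - q) + q := by ring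
  rw [hpq] at hu
  rcases Finset.mem_union.1 (MvPolynomial.support_add hu) with h | h
  · exact Or.inl (h1 u h)
  · obtain ⟨s, hs, hle⟩ := h2 u h
    right
    rcases hs with rfl | hs
    · left
      simpa using hle 0
    · right
      rw [Set.mem_singleton_iff.1 hs] at hle
      have e0 := hle 0
      have e1 := hle 1
      constructor
      · simpa using e1
      · simpa using e0

lemma dh_exp_exists {d s n : ℕ} (h1 : 1 ≤ s) (h2 : s ≤ n) (u : Fin (d + 2) →₀ ℕ)
    (hdeg : u.degree = 2 * n) (hu : u 1 < 2)
    (h : 2 ≤ u 1 ∨ n ≤ u 0 ∨ (1 ≤ u 1 ∧ n - s ≤ u 0)) : ∃ x, dhExp d s n x = u := by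
  rcases Nat.lt_or_ge (u 1) 1 with h0 | h0
  · have hle : Finsupp.single 0 n ≤ u := by
      rw [Finsupp.single_le_iff]
      omega
    obtain ⟨v, rfl⟩ := exists_add_of_le hle
    have e1 : v 1 = 0 := by
      simp at h0
      exact h0
    have e2 : v.degree = n := by
      simp at hdeg
      omega
    exact ⟨Sum.inl ⟨v, e1, e2⟩, rfl⟩
  · have hle : Finsupp.single 1 1 + Finsupp.single 0 (n - s) ≤ u := by
      intro j
      by_cases hj0 : j = 0
      · subst hj0
        simp
        omega
      · by_cases hj1 : j = 1
        · subst hj1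
          simp
          omega
        · simp [Ne.symm hj0, Ne.symm hj1]
    obtain ⟨v, rfl⟩ := exists_add_of_le hle
    have e1 : v 1 = 0 := by
      simp at hu
      omega
    have e2 : v.degree = n + s - 1 := by
      simp only [map_add, Finsupp.degree_single] at hdeg
      omega
    exact ⟨Sum.inr ⟨v, e1, e2⟩, rfl⟩

lemma dh_span (k : Type) [Field k] (d : ℕ) (σ : ℕ → ℕ) (n : ℕ) (hn : 1 ≤ n)
    (h1 : 1 ≤ σ n) (h2 : σ n ≤ n) :
    Submodule.span k (Set.range (dhBasisFamily k d σ n)) = dhComponent k d σ n := by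
  apply le_antisymm
  · rw [Submodule.span_le]
    rintro _ ⟨x, rfl⟩
    refine ⟨?_, ?_⟩
    · change dhBasisFamily k d σ n x ∈ dhIdeal k d σ n
      rw [dhIdeal, if_neg (by omega)]
      rcases x with v | v
      · simp only [dhBasisFamily, Sum.elim_inl]
        rw [map_mul _ _ (MvPolynomial.monomial v.1 1)]
        exact Ideal.mul_mem_right _ _ (Ideal.subset_span (Set.mem_insert _ _))
      · simp only [dhBasisFamily, Sum.elim_inr]
        rw [map_mul _ _ (MvPolynomial.monomial v.1 1)]
        exact Ideal.mul_mem_right _ _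
          (Ideal.subset_span (Set.mem_insert_of_mem _ (Set.mem_singleton _)))
    · rw [dh_family_eq]
      refine ⟨_, ?_, rfl⟩
      exact MvPolynomial.isHomogeneous_monomial _ (dhExp_degree d (σ n) n h1 h2 x)
  · rintro y ⟨hy, p, hp, rfl⟩
    have hsup := dh_mem_ideal hn (show dhQuot k d p ∈ dhIdeal k d σ n from hy)
    have hhom : MvPolynomial.IsHomogeneous p (2 * n) := hp
    rw [MvPolynomial.as_sum p, map_sum]
    refine Submodule.sum_mem _ fun u hu => ?_
    change dhQuot k d (MvPolynomial.monomial u (p.coeff u)) ∈ _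
    by_cases hu2 : 2 ≤ u 1
    · rw [dh_monomial_zero k d u _ hu2]
      exact Submodule.zero_mem _
    · have hdeg : u.degree = 2 * n := by
        rw [Finsupp.degree_eq_weight_one]
        exact hhom (MvPolynomial.mem_support_iff.1 hu)
      obtain ⟨x, rfl⟩ := dh_exp_exists h1 h2 u hdeg (by omega) (hsup u hu)
      have : (MvPolynomial.monomial (dhExp d (σ n) n x)) (p.coeff (dhExp d (σ n) n x)) =
          p.coeff (dhExp d (σ n) n x) • MvPolynomial.monomial (dhExp d (σ n) n x) (1 : k) := by
        rw [MvPolynomial.smul_monomial, smul_eq_mul, mul_one]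
      rw [this, map_smul]
      refine Submodule.smul_mem _ _ (Submodule.subset_span ⟨x, ?_⟩)
      rw [dh_family_eq]

/-- The monomial index type as a finite set. -/
def dhMonIdxEquiv (d m : ℕ) :
    dhMonIdx d m ≃ ((Finset.univ.erase (1 : Fin (d + 2))).finsuppAntidiag m) :=
  Equiv.subtypeEquivRight fun v => by
    rw [Finset.mem_finsuppAntidiag']
    have : v.support ⊆ Finset.univ.erase (1 : Fin (d + 2)) ↔ v 1 = 0 := by
      constructor
      · intro h
        by_contra hne
        have := h (Finsupp.mem_support_iff.2 hne)
        simp at this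
      · intro h j hj
        rw [Finset.mem_erase]
        refine ⟨?_, Finset.mem_univ _⟩
        rintro rfl
        exact (Finsupp.mem_support_iff.1 hj) h
    rw [this, and_comm]

instance dhMonIdxFintype (d m : ℕ) : Fintype (dhMonIdx d m) :=
  Fintype.ofEquiv _ (dhMonIdxEquiv d m).symm

lemma dhMonIdx_card (d m : ℕ) : Fintype.card (dhMonIdx d m) = (d + m).choose d := by
  rw [Fintype.card_congr (dhMonIdxEquiv d m), Fintype.card_coe,
    Finset.card_finsuppAntidiag_nat_eq_choose, Finset.card_erase_of_mem (Finset.mem_univ _),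
    Finset.card_univ, Fintype.card_fin]
  have : d + 2 - 1 + m - 1 = d + m := by omega
  rw [this, Nat.choose_symm_add]

lemma dh_seq_exists (i : ℕ → ℕ) (hi1 : i 1 = 2)
    (hmono : ∀ j, 1 ≤ j → i j < i (j + 1)) (n : ℕ) (hn : 2 ≤ n) :
    ∃ j, 1 ≤ j ∧ i j ≤ n ∧ n < i (j + 1) := by
  have hge : ∀ j, j + 1 < i (j + 1) := by
    intro j
    induction j with
    | zero => simp [hi1]
    | succ j ih =>
      have := hmono (j + 1) (by omega)
      omega
  have hex : ∃ j, n < i (j + 1) := ⟨n, by have := hge n; omega⟩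
  classical
  have hs := Nat.find_spec hex
  have hm := fun m => Nat.find_min hex (m := m)
  set j := Nat.find hex
  rcases Nat.eq_zero_or_pos j with h | h
  · rw [h] at hs
    simp only [zero_add, hi1] at hs
    omega
  · refine ⟨j, h, ?_, hs⟩
    have := hm (j - 1) (by omega)
    rw [Nat.sub_add_cancel h] at this
    omega

lemma dh_mul (k : Type) [Field k] (d : ℕ) (σ : ℕ → ℕ)
    (hle : ∀ n, 1 ≤ n → σ n ≤ n)
    (hmono : ∀ m n, 1 ≤ m → m ≤ n → σ m ≤ σ n) (m n : ℕ) :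
    dhIdeal k d σ m * dhIdeal k d σ n ≤ dhIdeal k d σ (m + n) := by
  rcases Nat.eq_zero_or_pos m with rfl | hm
  · rw [zero_add]
    exact Ideal.mul_le_right (I := dhIdeal k d σ 0)
  rcases Nat.eq_zero_or_pos n with rfl | hn
  · rw [add_zero]
    exact Ideal.mul_le_left (I := dhIdeal k d σ m) (J := dhIdeal k d σ 0)
  have key : ∀ t, (dhQuot k d (MvPolynomial.X 1 * MvPolynomial.X 0 ^
      (m + n - σ (m + n) + t))) ∈ dhIdeal k d σ (m + n) := by
    intro t
    rw [dhIdeal, if_neg (by omega), pow_add _ (m + n - σ (m + n)) t, ← mul_assoc, map_mul _ _ (MvPolynomial.X 0 ^ t)]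
    exact Ideal.mul_mem_right _ _
      (Ideal.subset_span (Set.mem_insert_of_mem _ (Set.mem_singleton _)))
  have hmm := hmono m (m + n) hm (by omega)
  have hnn := hmono n (m + n) hn (by omega)
  have lm := hle m hm
  have ln := hle n hn
  have lmn := hle (m + n) (by omega)
  conv_lhs => rw [dhIdeal, dhIdeal, if_neg (by omega), if_neg (by omega)]
  rw [Ideal.span_mul_span', Ideal.span_le]
  rintro _ ⟨a, ha, b, hb, rfl⟩
  simp only [Set.mem_insert_iff, Set.mem_singleton_iff] at ha hb
  simp only [SetLike.mem_coe]
  rcases ha with rfl | rfl <;> rcases hb with rfl | rfl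
  · rw [← map_mul, ← pow_add, dhIdeal, if_neg (by omega)]
    exact Ideal.subset_span (by simp)
  · have := key (σ (m + n) - σ n)
    rw [← map_mul]
    convert this using 2
    rw [mul_left_comm, ← pow_add]
    congr 2
    omega
  · have := key (σ (m + n) - σ m)
    rw [← map_mul]
    convert this using 2
    rw [mul_assoc, ← pow_add]
    congr 2
    omega
  · rw [← map_mul]
    have : dhQuot k d (MvPolynomial.X 1 * MvPolynomial.X 0 ^ (m - σ m) *
        (MvPolynomial.X 1 * MvPolynomial.X 0 ^ (n - σ n))) = 0 := by
      refine Ideal.Quotient.eq_zero_iff_mem.2 ?_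
      rw [Ideal.mem_span_singleton]
      exact ⟨MvPolynomial.X 0 ^ (m - σ m) * MvPolynomial.X 0 ^ (n - σ n), by ring⟩
    rw [this]
    exact Ideal.zero_mem _

theorem double_hyperplane_ideal_family (i σ : ℕ → ℕ)
    (hipos : ∀ j, 1 ≤ j → 0 < i j)
    (hi1 : i 1 = 2)
    (hieven : ∀ j, 1 ≤ j → Even (i (j + 1)))
    (higrow : ∀ j, 1 ≤ j → 2 ^ j * i j < i (j + 1))
    (hσ1 : σ 1 = 1)
    (hσ : ∀ j n, 1 ≤ j → i j ≤ n → n < i (j + 1) → σ n = i j / 2)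
    (k : Type) [Field k] (d : ℕ) (hd : 1 ≤ d) :
    (∀ m n : ℕ, dhIdeal k d σ m * dhIdeal k d σ n ≤ dhIdeal k d σ (m + n)) ∧
    (∀ n : ℕ, 1 ≤ n →
      LinearIndependent k (dhBasisFamily k d σ n) ∧
      Submodule.span k (Set.range (dhBasisFamily k d σ n)) = dhComponent k d σ n ∧
      Module.finrank k (dhComponent k d σ n) =
        (d + n).choose d + (d + n + σ n - 1).choose d) := by
  have hinc : ∀ j, 1 ≤ j → i j < i (j + 1) := by
    intro j hj
    have h1 := higrow j hj
    have h2 : 1 * i j ≤ 2 ^ j * i j := Nat.mul_le_mul_right _ Nat.one_le_two_pow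
    omega
  have himono : ∀ a b, 1 ≤ a → a ≤ b → i a ≤ i b := by
    intro a b ha hab
    induction b, hab using Nat.le_induction with
    | base => exact le_rfl
    | succ b hb ih => exact ih.trans (hinc b (by omega)).le
  have hσb : ∀ n, 1 ≤ n → 1 ≤ σ n ∧ σ n ≤ n := by
    intro n hn
    rcases Nat.lt_or_ge n 2 with h | h
    · have : n = 1 := by omega
      subst this
      omega
    · obtain ⟨j, hj, h1, h2⟩ := dh_seq_exists i hi1 hinc n h
      rw [hσ j n hj h1 h2]
      have := himono 1 j le_rfl hj
      omega
  have hσm : ∀ m n, 1 ≤ m → m ≤ n → σ m ≤ σ n := by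
    intro m n hm hmn
    rcases Nat.lt_or_ge m 2 with h | h
    · have : m = 1 := by omega
      subst this
      rw [hσ1]
      exact (hσb n hmn).1
    · obtain ⟨j, hj, h1, h2⟩ := dh_seq_exists i hi1 hinc m h
      obtain ⟨l, hl, h3, h4⟩ := dh_seq_exists i hi1 hinc n (by omega)
      rw [hσ j m hj h1 h2, hσ l n hl h3 h4]
      have hjl : j ≤ l := by
        by_contra hc
        have := himono (l + 1) j (by omega) (by omega)
        omega
      exact Nat.div_le_div_right (himono j l hj hjl)
  refine ⟨dh_mul k d σ (fun n hn => (hσb n hn).2) hσm, fun n hn => ?_⟩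
  obtain ⟨h1, h2⟩ := hσb n hn
  have hli := dh_linInd k d σ n
  have hsp := dh_span k d σ n hn h1 h2
  refine ⟨hli, hsp, ?_⟩
  rw [← hsp, finrank_span_eq_card hli, Fintype.card_sum, dhMonIdx_card, dhMonIdx_card]
  congr 2
  omega

end
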